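/- Let G = SO₃(ℂ) act on V = R₄, the 5-dimensional irreducible representation of SL₂(ℂ) (which factors through SO₃). Then G' = G: every element of GL(V) preserving all G-invariant polynomials lies in the image of SO₃. -/

import Mathlib

noncomputable section

/-- A function `V → ℂ` is a polynomial function if it lies in the subalgebra of
functions generated by the linear functionals, i.e. it is given by a polynomial
in linear coordinates. -/
def IsPolyFun {V : Type*} [AddCommGroup V] [Module ℂ V] (f : V → ℂ) : Prop :=
  f ∈ Algebra.adjoin ℂ (Set.range fun l : V →ₗ[ℂ] ℂ => (l : V → ℂ))

/-- Given a subgroup `G` of `GL(V)`, the group `G'` of all linear automorphisms of `V`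
preserving every `G`-invariant polynomial function on `V`. -/
def primeGroup {V : Type*} [AddCommGroup V] [Module ℂ V]
    (G : Subgroup (V ≃ₗ[ℂ] V)) : Subgroup (V ≃ₗ[ℂ] V) where
  carrier := {φ | ∀ f : V → ℂ, IsPolyFun f →
      (∀ g ∈ G, ∀ v : V, f (g v) = f v) → ∀ v : V, f (φ v) = f v}
  one_mem' := by intro f _ _ v; rfl
  mul_mem' := by
    intro a b ha hb f hf hinv v
    have h2 : f (a (b v)) = f (b v) := ha f hf hinv (b v)
    exact h2.trans (hb f hf hinv v)
  inv_mem' := by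
    intro a ha f hf hinv v
    have h := ha f hf hinv (a⁻¹ v)
    have : a (a⁻¹ v) = v := a.apply_symm_apply v
    rw [this] at h
    exact h.symm

/-- The algebraic exponential of an endomorphism of a finite-dimensional space
(intended for nilpotent endomorphisms, where the series is a finite sum). -/
def endExp {g : Type*} [AddCommGroup g] [Module ℂ g] [FiniteDimensional ℂ g]
    (A : Module.End ℂ g) : Module.End ℂ g :=
  ∑ k ∈ Finset.range (Module.finrank ℂ g + 1), (k.factorial : ℂ)⁻¹ • A ^ k

/-- The adjoint group `G = Aut(g)⁰` of a semisimple Lie algebra `g`: the subgroup of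
`GL(g)` generated by the exponentials of nilpotent inner derivations `ad x`. -/
def adjointGroup (g : Type*) [LieRing g] [LieAlgebra ℂ g] [FiniteDimensional ℂ g] :
    Subgroup (g ≃ₗ[ℂ] g) :=
  Subgroup.closure {u : g ≃ₗ[ℂ] g | ∃ x : g,
    IsNilpotent (LieAlgebra.ad ℂ g x) ∧ (u : g →ₗ[ℂ] g) = endExp (LieAlgebra.ad ℂ g x)}

/-- The subgroup of `GL(g)` fixing a subalgebra `t` pointwise. -/
def pointwiseStab {g : Type*} [LieRing g] [LieAlgebra ℂ g]
    (t : LieSubalgebra ℂ g) : Subgroup (g ≃ₗ[ℂ] g) where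
  carrier := {u | ∀ x ∈ t, u x = x}
  one_mem' := by intro x _; rfl
  mul_mem' := by
    intro a b ha hb x hx
    have : a (b x) = a x := by rw [hb x hx]
    exact this.trans (ha x hx)
  inv_mem' := by
    intro a ha x hx
    conv_lhs => rw [← ha x hx]
    exact a.symm_apply_apply x

/-- The maximal torus of the adjoint group corresponding to a Cartan subalgebra `t`:
the elements of the adjoint group acting trivially on `t`. -/
def maximalTorus (g : Type*) [LieRing g] [LieAlgebra ℂ g] [FiniteDimensional ℂ g]
    (t : LieSubalgebra ℂ g) : Subgroup (g ≃ₗ[ℂ] g) :=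
  adjointGroup g ⊓ pointwiseStab t

namespace Stmt18

/-- A representation of `SL₂(ℂ)` is polynomial (algebraic) if all its matrix
coefficients are polynomial functions of the matrix entries. -/
def IsPolynomialRep {W : Type} [AddCommGroup W] [Module ℂ W]
    (ρ : Matrix.SpecialLinearGroup (Fin 2) ℂ →* (W ≃ₗ[ℂ] W)) : Prop :=
  ∀ (l : W →ₗ[ℂ] ℂ) (w : W), ∃ p : MvPolynomial (Fin 2 × Fin 2) ℂ,
    ∀ g : Matrix.SpecialLinearGroup (Fin 2) ℂ,
      l (ρ g w) = MvPolynomial.eval (fun ij => (g : Matrix (Fin 2) (Fin 2) ℂ) ij.1 ij.2) p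

/-- Irreducibility of a representation. -/
def IsIrreducibleRep {W : Type} [AddCommGroup W] [Module ℂ W]
    (ρ : Matrix.SpecialLinearGroup (Fin 2) ℂ →* (W ≃ₗ[ℂ] W)) : Prop :=
  ∀ U : Submodule ℂ W, (∀ g : Matrix.SpecialLinearGroup (Fin 2) ℂ, ∀ w ∈ U, ρ g w ∈ U) →
    U = ⊥ ∨ U = ⊤

/-!
The matrix coefficients `t ↦ l (ρ (upper t) w)` of a lowest weight vector `l` of the dual
representation embed the representation into the polynomials in `t`. The image is stable under
translation, so it consists of all polynomials of degree less than `5`, and comparing degrees under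
the Weyl group element determines the torus character of `l`: the representation is that on binary
quartics.

Let `φ` preserve the invariants of degrees two and three. The differential of the cubic invariant
vanishes exactly at the fourth powers of linear forms, so `φ` permutes these, and the polarization
of the quadratic invariant shows that `φ` maps `x⁴` and `y⁴` to their images under an element of
`SL₂`. If `φ` fixes `x⁴` and `y⁴`, the two invariants force `φ = diag(1, ε, 1, ε, 1)` with `ε² = 1`,
which is the action of `diag(s, s⁻¹)` for `s² = ε`.
-/

section InvariantPolynomials

variable {V : Type*} [AddCommGroup V] [Module ℂ V]

theorem le_primeGroup (G : Subgroup (V ≃ₗ[ℂ] V)) : G ≤ primeGroup G :=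
  fun g hg _ _ hinv v ↦ hinv g hg v

theorem isPolyFun_coord {n : ℕ} (e : V ≃ₗ[ℂ] (Fin n → ℂ)) (i : Fin n) :
    IsPolyFun fun v ↦ e v i :=
  Algebra.subset_adjoin ⟨LinearMap.proj i ∘ₗ e.toLinearMap, rfl⟩

end InvariantPolynomials

section LinearMaps

theorem exists_forall_apply_eq_smul_of_commute {K V ι : Type*} [Field K] [IsAlgClosed K]
    [AddCommGroup V] [Module K V] [FiniteDimensional K V] {f : ι → Module.End K V}
    (hf : ∀ i j, Commute (f i) (f j)) {U : Submodule K V} (hU : U ≠ ⊥)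
    (hfU : ∀ i, ∀ v ∈ U, f i v ∈ U) : ∃ v ∈ U, v ≠ 0 ∧ ∀ i, ∃ c : K, f i v = c • v := by
  obtain ⟨U', ⟨hU'U, hU', hfU'⟩, hmin⟩ := wellFounded_lt.has_min
    {U' : Submodule K V | U' ≤ U ∧ U' ≠ ⊥ ∧ ∀ i, ∀ v ∈ U', f i v ∈ U'} ⟨U, le_rfl, hU, hfU⟩
  obtain ⟨v, hv, hv₀⟩ := U'.ne_bot_iff.mp hU'
  refine ⟨v, hU'U hv, hv₀, fun i ↦ ?_⟩
  have : Nontrivial U' := Submodule.nontrivial_iff_ne_bot.mpr hU'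
  obtain ⟨c, hc⟩ := Module.End.exists_eigenvalue ((f i).restrict (hfU' i))
  obtain ⟨u, hu⟩ := hc.exists_hasEigenvector
  have hne : U' ⊓ (f i).eigenspace c ≠ ⊥ := (Submodule.ne_bot_iff _).mpr
    ⟨u, ⟨u.2, Module.End.mem_eigenspace_iff.mpr congr($(hu.apply_eq_smul).1)⟩, by simpa using hu.2⟩
  have hstable (j) : ∀ w ∈ U' ⊓ (f i).eigenspace c, f j w ∈ U' ⊓ (f i).eigenspace c :=
    fun w hw ↦ ⟨hfU' j w hw.1, Module.End.mapsTo_genEigenspace_of_comm (hf i j) c 1 hw.2⟩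
  have heq : U' ⊓ (f i).eigenspace c = U' := inf_le_left.eq_of_not_lt
    (hmin _ ⟨inf_le_left.trans hU'U, hne, hstable⟩)
  exact ⟨c, Module.End.mem_eigenspace_iff.mp (heq.ge hv).2⟩

theorem commute_dualMap {R M : Type*} [CommRing R] [AddCommGroup M] [Module R M]
    {e f : M ≃ₗ[R] M} (h : Commute e f) :
    Commute e.toLinearMap.dualMap f.toLinearMap.dualMap :=
  LinearMap.ext fun l ↦ LinearMap.ext fun m ↦ congr(l ($h.symm m))

theorem eq_zero_or_eq_zero_of_forall_mul_apply_eq_zero {R M : Type*} [CommRing R]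
    [NoZeroDivisors R] [AddCommGroup M] [Module R M] {f g : M →ₗ[R] R}
    (h : ∀ m, f m * g m = 0) : f = 0 ∨ g = 0 := by
  by_contra! hfg
  obtain ⟨a, ha⟩ := DFunLike.ne_iff.mp hfg.1
  obtain ⟨b, hb⟩ := DFunLike.ne_iff.mp hfg.2
  have hga : g a = 0 := (mul_eq_zero.mp (h a)).resolve_left ha
  have hfb : f b = 0 := (mul_eq_zero.mp (h b)).resolve_right hb
  have hab : f a * g b = 0 := by simpa [hga, hfb] using h (a + b)
  exact mul_ne_zero ha hb hab

theorem eq_or_eq_neg_of_forall_sq_eq {R M : Type*} [CommRing R] [NoZeroDivisors R]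
    [AddCommGroup M] [Module R M] {f g : M →ₗ[R] R} (h : ∀ m, f m ^ 2 = g m ^ 2) :
    f = g ∨ f = -g := by
  rw [← sub_eq_zero, eq_neg_iff_add_eq_zero]
  refine eq_zero_or_eq_zero_of_forall_mul_apply_eq_zero fun m ↦ ?_
  rw [LinearMap.sub_apply, LinearMap.add_apply]
  linear_combination h m

theorem polar_map_map {R M N A : Type*} [Semiring R] [AddCommGroup M] [AddCommGroup N]
    [Module R M] [Module R N] [AddCommGroup A] {φ : M →ₗ[R] N} {f : M → A} {g : N → A}
    (h : ∀ m, g (φ m) = f m) (m m' : M) :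
    QuadraticMap.polar g (φ m) (φ m') = QuadraticMap.polar f m m' := by
  simp only [QuadraticMap.polar, ← map_add, h]

end LinearMaps

section Polynomials

open Polynomial

theorem exists_linearMap_eval_eq {R M : Type*} [CommRing R] [IsDomain R] [Infinite R]
    [AddCommMonoid M] [Module R M] {f : R → M →ₗ[R] R}
    (hf : ∀ m, ∃ p : R[X], ∀ t, p.eval t = f t m) :
    ∃ q : M →ₗ[R] R[X], ∀ t m, (q m).eval t = f t m := by
  choose q hq using hf
  exact ⟨{ toFun := q
           map_add' := fun m m' ↦ funext fun t ↦ by simp [hq]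
           map_smul' := fun c m ↦ funext fun t ↦ by simp [hq] }, fun t m ↦ hq m t⟩

theorem eq_of_forall_eval_ne_zero {R : Type*} [CommRing R] [IsDomain R] [Infinite R]
    {r p q : R[X]} (hr : r ≠ 0) (h : ∀ t, r.eval t ≠ 0 → p.eval t = q.eval t) : p = q := by
  refine mul_left_cancel₀ hr (funext fun t ↦ ?_)
  by_cases ht : r.eval t = 0
  · simp [ht]
  · rw [eval_mul, eval_mul, h t ht]

theorem eq_one_of_eval_add {R : Type*} [CommRing R] [IsDomain R] [Infinite R] {p : R[X]}
    (hp : p ≠ 0) (hadd : ∀ s t, p.eval (s + t) = p.eval s * p.eval t) : p = 1 := by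
  have h₀ : p.eval 0 = 1 := by
    obtain ⟨t, ht⟩ : ∃ t, p.eval t ≠ 0 := by
      by_contra! h
      exact hp (funext fun t ↦ by simp [h])
    exact mul_left_cancel₀ ht (by rw [← hadd, add_zero, mul_one])
  have hmul : p * p.comp (-X) = 1 := funext fun t ↦ by simp [← hadd, h₀]
  obtain ⟨c, -, rfl⟩ := isUnit_iff.mp (IsUnit.of_mul_eq_one _ hmul)
  rw [eval_C] at h₀
  rw [h₀, C_1]

theorem natDegree_lt_of_fwdDiff_iter_eq_zero {R : Type*} [CommRing R] [IsDomain R] [CharZero R]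
    {p : R[X]} {n : ℕ} (hn : (fwdDiff 1)^[n] p.eval = 0) (hp : p ≠ 0) : p.natDegree < n := by
  by_contra! hle
  have hzero : fwdDiff (1 : R) (0 : R → R) = 0 := fwdDiff_const 1 0
  have h := p.fwdDiff_iter_degree_eq_factorial
  rw [← Nat.sub_add_cancel hle, Function.iterate_add_apply, hn,
    Function.iterate_fixed hzero, Nat.sub_add_cancel hle] at h
  simpa [hp, Nat.factorial_ne_zero] using congr($h 0)

theorem eval_taylor_sub_one_pow {R : Type*} [CommRing R] (n : ℕ) (p : R[X]) :
    (((taylor 1 - 1 : Module.End R R[X]) ^ n) p).eval = (fwdDiff 1)^[n] p.eval := by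
  induction n with
  | zero => rfl
  | succ n ih =>
    rw [Function.iterate_succ_apply', ← ih, pow_succ']
    ext t
    simp [fwdDiff, taylor_eval]

theorem eq_degreeLT_of_taylor_mem {K : Type*} [Field K] [CharZero K] {Q : Submodule K K[X]}
    [FiniteDimensional K Q] (hQ : ∀ p ∈ Q, taylor 1 p ∈ Q) :
    Q = degreeLT K (Module.finrank K Q) := by
  have hstable : ∀ p ∈ Q, (taylor 1 - 1 : Module.End K K[X]) p ∈ Q :=
    fun p hp ↦ Q.sub_mem (hQ p hp) hp
  set Δ := (taylor 1 - 1 : Module.End K K[X]).restrict hstable with hΔ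
  have heval (n : ℕ) (p : Q) : ((Δ ^ n) p : K[X]).eval = (fwdDiff 1)^[n] (p : K[X]).eval := by
    rw [← eval_taylor_sub_one_pow, hΔ, Module.End.pow_restrict, LinearMap.coe_restrict_apply]
  have hnil : IsNilpotent Δ := Module.End.isNilpotent_iff_of_finite.mpr fun p ↦
    ⟨(p : K[X]).natDegree + 1, Subtype.ext <| funext fun t ↦ by
      simpa [fwdDiff_iter_degree_add_one_eq_zero] using congr($(heval (natDegree p.1 + 1) p) t)⟩
  have hpow : Δ ^ Module.finrank K Q = 0 := by
    simpa [(LinearMap.isNilpotent_iff_charpoly Δ).mp hnil] using Δ.aeval_self_charpoly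
  refine Submodule.eq_of_le_of_finrank_eq (fun p hp ↦ ?_) ?_
  · rcases eq_or_ne p 0 with rfl | hp₀
    · exact zero_mem _
    · rw [mem_degreeLT, ← natDegree_lt_iff_degree_lt hp₀]
      refine natDegree_lt_of_fwdDiff_iter_eq_zero ?_ hp₀
      rw [← heval _ ⟨p, hp⟩, hpow]
      ext t
      simp
  · simp [(degreeLTEquiv K _).finrank_eq]

theorem eval_homogenize_eq_sum {R : Type*} [CommRing R] (n : ℕ) (p : R[X]) (x : Fin 2 → R) :
    MvPolynomial.eval x (p.homogenize n) =
      ∑ k ∈ Finset.range (n + 1), p.coeff k * x 0 ^ k * x 1 ^ (n - k) := by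
  rw [← Finset.Nat.sum_antidiagonal_eq_sum_range_succ fun k l ↦ p.coeff k * x 0 ^ k * x 1 ^ l,
    homogenize, map_sum]
  simp [MvPolynomial.eval_monomial, Finsupp.update_apply, Finsupp.prod_fintype, Fin.prod_univ_two,
    mul_assoc]

end Polynomials

section SpecialLinearTwo

open Matrix Polynomial

variable {K : Type*} [Field K]

/-- The upper unitriangular one-parameter subgroup of `SL₂`. -/
def upper (t : K) : SpecialLinearGroup (Fin 2) K := ⟨!![1, t; 0, 1], by simp⟩

/-- The lower unitriangular one-parameter subgroup of `SL₂`. -/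
def lower (t : K) : SpecialLinearGroup (Fin 2) K := ⟨!![1, 0; t, 1], by simp⟩

/-- The diagonal torus of `SL₂`. -/
def torus (a : Kˣ) : SpecialLinearGroup (Fin 2) K := ⟨!![(a : K), 0; 0, (a : K)⁻¹], by simp⟩

/-- The nontrivial Weyl group representative in `SL₂`. -/
def weyl : SpecialLinearGroup (Fin 2) K := ⟨!![0, -1; 1, 0], by simp⟩

theorem coe_upper (t : K) : (upper t : Matrix (Fin 2) (Fin 2) K) = !![1, t; 0, 1] := rfl

theorem coe_lower (t : K) : (lower t : Matrix (Fin 2) (Fin 2) K) = !![1, 0; t, 1] := rfl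

theorem coe_torus (a : Kˣ) :
    (torus a : Matrix (Fin 2) (Fin 2) K) = !![(a : K), 0; 0, (a : K)⁻¹] := rfl

theorem lower_zero : lower (0 : K) = 1 := by
  ext i j
  fin_cases i <;> fin_cases j <;> simp [coe_lower]

theorem torus_one : torus (1 : Kˣ) = 1 := by
  ext i j
  fin_cases i <;> fin_cases j <;> simp [coe_torus]

theorem upper_zero : upper (0 : K) = 1 := by
  ext i j
  fin_cases i <;> fin_cases j <;> simp [coe_upper]

theorem upper_mul_upper (s t : K) : upper s * upper t = upper (s + t) := by
  ext i j
  fin_cases i <;> fin_cases j <;> simp [coe_upper, add_comm]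

theorem lower_mul_lower (s t : K) : lower s * lower t = lower (s + t) := by
  ext i j
  fin_cases i <;> fin_cases j <;> simp [coe_lower]

theorem commute_lower (s t : K) : Commute (lower s) (lower t) := by
  rw [commute_iff_eq, lower_mul_lower, lower_mul_lower, add_comm]

theorem commute_torus (a b : Kˣ) : Commute (torus a) (torus b) := by
  ext i j
  fin_cases i <;> fin_cases j <;> simp [coe_torus, mul_comm]

theorem torus_mul_lower (a : Kˣ) (t : K) :
    torus a * lower t = lower (t / a ^ 2) * torus a := by
  have h : t / (a : K) ^ 2 * a = (a : K)⁻¹ * t := by field_simp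
  ext i j
  fin_cases i <;> fin_cases j <;> simp [coe_torus, coe_lower, h]

theorem C_add_C_mul_X_ne_zero (g : SpecialLinearGroup (Fin 2) K) :
    C (g 0 0) + C (g 1 0) * X ≠ 0 := fun h ↦ by
  have h₀₀ : g 0 0 = 0 := by simpa using congr(eval 0 $h)
  have h₁₀ : g 1 0 = 0 := by simpa [h₀₀] using congr(eval 1 $h)
  simpa [h₀₀, h₁₀] using (det_fin_two (g : Matrix (Fin 2) (Fin 2) K)).symm.trans g.det_coe

theorem eq_lower_mul_torus_mul_upper (g : SpecialLinearGroup (Fin 2) K) (a : Kˣ)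
    (ha : g 0 0 = a) : g = lower (g 1 0 / a) * torus a * upper (g 0 1 / a) := by
  have hdet := g.det_coe
  rw [det_fin_two, ha] at hdet
  have h₀₁ : a * (g 0 1 / a) = g 0 1 := by field_simp
  have h₁₁ : g 1 1 = g 1 0 * (g 0 1 / a) + (a : K)⁻¹ := by
    field_simp
    linear_combination hdet
  ext i j
  fin_cases i <;> fin_cases j <;> simp [coe_torus, coe_lower, coe_upper, ha, h₀₁, h₁₁]

end SpecialLinearTwo

section LowestWeight

open Matrix Polynomial

variable {W : Type} [AddCommGroup W] [Module ℂ W]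
  {ρ : SpecialLinearGroup (Fin 2) ℂ →* (W ≃ₗ[ℂ] W)}

theorem IsPolynomialRep.exists_linearMap_eval_eq (hρ : IsPolynomialRep ρ)
    {γ : ℂ → SpecialLinearGroup (Fin 2) ℂ} {M : Matrix (Fin 2) (Fin 2) ℂ[X]}
    (hγ : ∀ t i j, γ t i j = (M i j).eval t) (l : Module.Dual ℂ W) :
    ∃ q : W →ₗ[ℂ] ℂ[X], ∀ t w, (q w).eval t = l (ρ (γ t) w) := by
  refine Stmt18.exists_linearMap_eval_eq (f := fun t ↦ l ∘ₗ (ρ (γ t)).toLinearMap) fun w ↦ ?_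
  obtain ⟨p, hp⟩ := hρ l w
  refine ⟨MvPolynomial.aeval (fun ij ↦ M ij.1 ij.2) p, fun t ↦ ?_⟩
  rw [LinearMap.comp_apply, LinearEquiv.coe_coe, hp, ← coe_aeval_eq_eval,
    MvPolynomial.comp_aeval_apply, MvPolynomial.aeval_eq_eval]
  simp only [hγ, coe_aeval_eq_eval]

theorem exists_linearMap_eval_eq_upper (hρ : IsPolynomialRep ρ) (l : Module.Dual ℂ W) :
    ∃ q : W →ₗ[ℂ] ℂ[X], ∀ t w, (q w).eval t = l (ρ (upper t) w) :=
  hρ.exists_linearMap_eval_eq (M := !![1, X; 0, 1])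
    (fun t i j ↦ by fin_cases i <;> fin_cases j <;> simp [coe_upper]) l

theorem exists_linearMap_eval_eq_lower (hρ : IsPolynomialRep ρ) (l : Module.Dual ℂ W) :
    ∃ q : W →ₗ[ℂ] ℂ[X], ∀ t w, (q w).eval t = l (ρ (lower t) w) :=
  hρ.exists_linearMap_eval_eq (M := !![1, 0; X, 1])
    (fun t i j ↦ by fin_cases i <;> fin_cases j <;> simp [coe_lower]) l

/-- The functional `l` is a lowest weight vector of the dual representation: it is fixed by the
lower unitriangular matrices, and `l ∘ ρ (torus a) = χ a • l`. -/
structure IsLowestWeight (ρ : SpecialLinearGroup (Fin 2) ℂ →* (W ≃ₗ[ℂ] W))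
    (l : Module.Dual ℂ W) (χ : ℂˣ → ℂ) : Prop where
  ne_zero : l ≠ 0
  apply_lower : ∀ t w, l (ρ (lower t) w) = l w
  apply_torus : ∀ a w, l (ρ (torus a) w) = χ a * l w

theorem exists_forall_lower_apply_eq [FiniteDimensional ℂ W] [Nontrivial W]
    (hρ : IsPolynomialRep ρ) :
    ∃ l : Module.Dual ℂ W, l ≠ 0 ∧ ∀ t w, l (ρ (lower t) w) = l w := by
  obtain ⟨l, -, hl, hχ⟩ := exists_forall_apply_eq_smul_of_commute (U := ⊤)
    (f := fun t ↦ (ρ (lower t)).toLinearMap.dualMap)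
    (fun s t ↦ commute_dualMap ((commute_lower s t).map ρ)) top_ne_bot (by simp)
  choose χ hχ using hχ
  replace hχ (t w) : l (ρ (lower t) w) = χ t * l w := congr($(hχ t) w)
  obtain ⟨w, hw⟩ := DFunLike.ne_iff.mp hl
  rw [LinearMap.zero_apply] at hw
  obtain ⟨q, hq⟩ := exists_linearMap_eval_eq_lower hρ l
  have heval (t) : (C (l w)⁻¹ * q w).eval t = χ t := by
    rw [eval_mul, eval_C, hq, hχ, mul_left_comm, inv_mul_cancel₀ hw, mul_one]
  have hχ_zero : χ 0 = 1 := mul_right_cancel₀ hw <| by rw [← hχ, lower_zero, map_one, one_mul]; rfl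
  have hχ_add (s t) : χ (s + t) = χ s * χ t := mul_right_cancel₀ hw <| by
    rw [← hχ, ← lower_mul_lower, map_mul, LinearEquiv.mul_apply, hχ, hχ, mul_assoc]
  have hone : C (l w)⁻¹ * q w = 1 := eq_one_of_eval_add
    (fun h ↦ by simpa [h, hχ_zero] using heval 0) (fun s t ↦ by rw [heval, heval, heval, hχ_add])
  exact ⟨l, hl, fun t w ↦ by rw [hχ, ← heval, hone, eval_one, one_mul]⟩

theorem exists_isLowestWeight [FiniteDimensional ℂ W] [Nontrivial W] (hρ : IsPolynomialRep ρ) :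
    ∃ l χ, IsLowestWeight ρ l χ := by
  obtain ⟨l₀, hl₀, hfix⟩ := exists_forall_lower_apply_eq hρ
  let U : Submodule ℂ (Module.Dual ℂ W) :=
    ⨅ t, LinearMap.eqLocus (ρ (lower t)).toLinearMap.dualMap LinearMap.id
  have hU (l) : l ∈ U ↔ ∀ t w, l (ρ (lower t) w) = l w := by
    simp [U, Submodule.mem_iInf, LinearMap.ext_iff]
  obtain ⟨l, hlU, hl, hχ⟩ := exists_forall_apply_eq_smul_of_commute
    (f := fun a ↦ (ρ (torus a)).toLinearMap.dualMap) (U := U)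
    (fun a b ↦ commute_dualMap ((commute_torus a b).map ρ))
    (U.ne_bot_iff.mpr ⟨l₀, (hU l₀).mpr hfix, hl₀⟩)
    (fun a l hl ↦ (hU _).mpr fun t w ↦ by
      change l (ρ (torus a) (ρ (lower t) w)) = l (ρ (torus a) w)
      rw [← LinearEquiv.mul_apply, ← map_mul, torus_mul_lower, map_mul, LinearEquiv.mul_apply,
        (hU l).mp hl])
  choose χ hχ using hχ
  exact ⟨l, χ, hl, (hU l).mp hlU, fun a w ↦ congr($(hχ a) w)⟩

section

variable {l : Module.Dual ℂ W} {χ : ℂˣ → ℂ}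

theorem IsLowestWeight.apply_eq (hl : IsLowestWeight ρ l χ) (g : SpecialLinearGroup (Fin 2) ℂ)
    {a : ℂˣ} (ha : g 0 0 = a) (w : W) :
    l (ρ g w) = χ a * l (ρ (upper (g 0 1 / a)) w) := by
  conv_lhs => rw [eq_lower_mul_torus_mul_upper g a ha]
  rw [map_mul, map_mul, LinearEquiv.mul_apply, LinearEquiv.mul_apply, hl.apply_lower,
    hl.apply_torus]

variable {q : W →ₗ[ℂ] ℂ[X]}

theorem map_upper_eq_taylor (hq : ∀ t w, (q w).eval t = l (ρ (upper t) w)) (s : ℂ) (w : W) :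
    q (ρ (upper s) w) = taylor s (q w) :=
  funext fun t ↦ by
    rw [hq, taylor_eval, hq, ← upper_mul_upper, map_mul, LinearEquiv.mul_apply]

theorem IsLowestWeight.eval_map (hl : IsLowestWeight ρ l χ)
    (hq : ∀ t w, (q w).eval t = l (ρ (upper t) w)) (g : SpecialLinearGroup (Fin 2) ℂ) {t : ℂ}
    {a : ℂˣ} (ha : g 0 0 + g 1 0 * t = a) (w : W) :
    (q (ρ g w)).eval t = χ a * (q w).eval ((g 0 1 + g 1 1 * t) / a) := by
  have h₀₀ : (upper t * g) 0 0 = a := by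
    simp [coe_upper, ← ha, mul_comm, mul_apply, Fin.sum_univ_two]
  have h₀₁ : (upper t * g) 0 1 = g 0 1 + g 1 1 * t := by
    simp [coe_upper, mul_comm, mul_apply, Fin.sum_univ_two]
  rw [hq, hq, ← LinearEquiv.mul_apply, ← map_mul, hl.apply_eq _ h₀₀, h₀₁]

theorem IsLowestWeight.injective (hl : IsLowestWeight ρ l χ) (hirr : IsIrreducibleRep ρ)
    (hq : ∀ t w, (q w).eval t = l (ρ (upper t) w)) : Function.Injective q := by
  rw [← LinearMap.ker_eq_bot]
  refine (hirr _ fun g w hw ↦ ?_).resolve_right fun htop ↦ hl.ne_zero (LinearMap.ext fun w ↦ ?_)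
  · refine eq_of_forall_eval_ne_zero (C_add_C_mul_X_ne_zero g) fun t ht ↦ ?_
    rw [hl.eval_map hq g (a := Units.mk0 _ ht) (by simp), LinearMap.mem_ker.mp hw]
    simp
  · have hw : q w = 0 := LinearMap.mem_ker.mp (htop ▸ Submodule.mem_top)
    simpa [hw, upper_zero] using (hq 0 w).symm

theorem range_eq_degreeLT [FiniteDimensional ℂ W] (hinj : Function.Injective q)
    (hq : ∀ t w, (q w).eval t = l (ρ (upper t) w)) :
    LinearMap.range q = degreeLT ℂ (Module.finrank ℂ W) := by
  rw [← LinearMap.finrank_range_of_inj hinj]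
  apply eq_degreeLT_of_taylor_mem
  rintro _ ⟨w, rfl⟩
  exact ⟨ρ (upper 1) w, map_upper_eq_taylor hq 1 w⟩

theorem IsLowestWeight.character_one (hl : IsLowestWeight ρ l χ) : χ 1 = 1 := by
  obtain ⟨w, hw⟩ := DFunLike.ne_iff.mp hl.ne_zero
  exact mul_right_cancel₀ hw (by rw [← hl.apply_torus, torus_one, map_one, one_mul]; rfl)

theorem IsLowestWeight.character_eq_pow (hl : IsLowestWeight ρ l χ) {n : ℕ}
    (hq : ∀ t w, (q w).eval t = l (ρ (upper t) w))
    (hrange : LinearMap.range q = degreeLT ℂ (n + 1)) (a : ℂˣ) : χ a = a ^ n := by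
  have heval (w) (a : ℂˣ) :
      (q (ρ weyl w)).eval (a : ℂ) = χ a * (q w).eval (-(a : ℂ)⁻¹) := by
    simpa [weyl, neg_div] using hl.eval_map hq weyl (t := a) (a := a) (by simp [weyl]) w
  obtain ⟨u, hu⟩ : ∃ u, q u = 1 := hrange.ge <| mem_degreeLT.mpr <| by
    rw [degree_one]
    exact_mod_cast n.succ_pos
  obtain ⟨v, hv⟩ : ∃ v, q v = (-X) ^ n := hrange.ge <| mem_degreeLT.mpr <| by
    rw [degree_pow, degree_neg, degree_X, nsmul_one]
    exact_mod_cast n.lt_succ_self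
  have hmul : q (ρ weyl u) = X ^ n * q (ρ weyl v) :=
    eq_of_forall_eval_ne_zero X_ne_zero fun t ht ↦ by
      obtain ⟨a, rfl⟩ : ∃ a : ℂˣ, (a : ℂ) = t := ⟨Units.mk0 t (by simpa using ht), rfl⟩
      rw [eval_mul, heval, heval, hu, hv]
      simp [mul_left_comm _ (χ a)]
  have hdeg : (q (ρ weyl v)).degree ≤ 0 := (degree_le_iff_coeff_zero _ _).mpr fun k hk ↦ by
    have hmem : q (ρ weyl u) ∈ degreeLT ℂ (n + 1) := hrange.le ⟨_, rfl⟩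
    rw [← coeff_X_pow_mul _ n, ← hmul]
    refine (degree_lt_iff_coeff_zero _ _).mp (mem_degreeLT.mp hmem) _ ?_
    have : 0 < k := by exact_mod_cast hk
    lia
  obtain ⟨c, hc⟩ : ∃ c, q (ρ weyl v) = C c := ⟨_, eq_C_of_degree_le_zero hdeg⟩
  have hχ (a : ℂˣ) : χ a = c * a ^ n := by
    simpa [hu, hmul, hc] using (heval u a).symm
  have hc₁ : c = 1 := by simpa [hl.character_one] using (hχ 1).symm
  rw [hχ, hc₁, one_mul]

end

/-- The action of a matrix on binary forms of degree `n`, dehomogenized: by `eval_formAction`,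
`p(t)` goes to `(g₀₀ + g₁₀ t)ⁿ p((g₀₁ + g₁₁ t) / (g₀₀ + g₁₀ t))`. -/
def formAction {R : Type*} [CommRing R] (n : ℕ) (g : Matrix (Fin 2) (Fin 2) R) (p : R[X]) : R[X] :=
  MvPolynomial.aeval ![C (g 0 1) + C (g 1 1) * X, C (g 0 0) + C (g 1 0) * X] (p.homogenize n)

theorem eval_formAction {R : Type*} [CommRing R] (n : ℕ) (g : Matrix (Fin 2) (Fin 2) R) (p : R[X])
    (t : R) : (formAction n g p).eval t =
      MvPolynomial.eval ![g 0 1 + g 1 1 * t, g 0 0 + g 1 0 * t] (p.homogenize n) := by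
  rw [formAction, ← coe_aeval_eq_eval, MvPolynomial.comp_aeval_apply, MvPolynomial.aeval_eq_eval]
  congr 2
  funext i
  fin_cases i <;> simp

theorem exists_linearEquiv_degreeLT_eq_formAction [FiniteDimensional ℂ W] {n : ℕ}
    (hW : Module.finrank ℂ W = n + 1) (hρ : IsPolynomialRep ρ) (hirr : IsIrreducibleRep ρ) :
    ∃ e : W ≃ₗ[ℂ] degreeLT ℂ (n + 1), ∀ g w, (e (ρ g w) : ℂ[X]) = formAction n g (e w) := by
  have : Nontrivial W := Module.nontrivial_of_finrank_eq_succ hW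
  obtain ⟨l, χ, hl⟩ := exists_isLowestWeight hρ
  obtain ⟨q, hq⟩ := exists_linearMap_eval_eq_upper hρ l
  have hinj := hl.injective hirr hq
  have hrange : LinearMap.range q = degreeLT ℂ (n + 1) := hW ▸ range_eq_degreeLT hinj hq
  refine ⟨(LinearEquiv.ofInjective q hinj).trans (LinearEquiv.ofEq _ _ hrange), fun g w ↦
    eq_of_forall_eval_ne_zero (C_add_C_mul_X_ne_zero g) fun t ht ↦ ?_⟩
  change (q (ρ g w)).eval t = (formAction n g (q w)).eval t
  obtain ⟨a, ha⟩ : ∃ a : ℂˣ, g 0 0 + g 1 0 * t = a := ⟨Units.mk0 _ (by simpa using ht), rfl⟩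
  have hdeg : (q w).natDegree ≤ n := natDegree_le_iff_degree_le.mpr <| mem_degreeLE.mp <|
    degreeLT_succ_eq_degreeLE.le (hrange.le ⟨w, rfl⟩)
  rw [hl.eval_map hq g ha, hl.character_eq_pow hq hrange, eval_formAction,
    eval_homogenize hdeg _ (by simp [ha]), mul_comm]
  simp only [cons_val, ha]

end LowestWeight

section BinaryQuartics

open Matrix

variable {K : Type*} [Field K]

/-- The binary quartic `∑ₖ (4 choose k) vₖ x⁴⁻ᵏ yᵏ`. The binomial weights make `symFour` below
satisfy `symFour_mulVec_veronese`. -/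
def quartic (v : Fin 5 → K) (x y : K) : K :=
  v 0 * x ^ 4 + 4 * v 1 * x ^ 3 * y + 6 * v 2 * x ^ 2 * y ^ 2 + 4 * v 3 * x * y ^ 3 + v 4 * y ^ 4

/-- The fourth power `(p₀ x + p₁ y)⁴` of a linear form, as a coefficient vector of `quartic`. -/
def veronese (p : Fin 2 → K) : Fin 5 → K :=
  ![p 0 ^ 4, p 0 ^ 3 * p 1, p 0 ^ 2 * p 1 ^ 2, p 0 * p 1 ^ 3, p 1 ^ 4]

/-- The fourth symmetric power of a `2 × 2` matrix, in the coordinates of `quartic`: row `k` holds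
the coefficients of `(g₀₀ X + g₀₁ Y)⁴⁻ᵏ (g₁₀ X + g₁₁ Y)ᵏ`. -/
def symFour (g : Matrix (Fin 2) (Fin 2) K) : Matrix (Fin 5) (Fin 5) K :=
  let a := g 0 0
  let b := g 0 1
  let c := g 1 0
  let d := g 1 1
  !![a ^ 4, 4 * a ^ 3 * b, 6 * a ^ 2 * b ^ 2, 4 * a * b ^ 3, b ^ 4;
    a ^ 3 * c, a ^ 3 * d + 3 * a ^ 2 * b * c, 3 * a ^ 2 * b * d + 3 * a * b ^ 2 * c,
      3 * a * b ^ 2 * d + b ^ 3 * c, b ^ 3 * d;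
    a ^ 2 * c ^ 2, 2 * a ^ 2 * c * d + 2 * a * b * c ^ 2,
      a ^ 2 * d ^ 2 + 4 * a * b * c * d + b ^ 2 * c ^ 2, 2 * a * b * d ^ 2 + 2 * b ^ 2 * c * d,
      b ^ 2 * d ^ 2;
    a * c ^ 3, 3 * a * c ^ 2 * d + b * c ^ 3, 3 * a * c * d ^ 2 + 3 * b * c ^ 2 * d,
      a * d ^ 3 + 3 * b * c * d ^ 2, b * d ^ 3;
    c ^ 4, 4 * c ^ 3 * d, 6 * c ^ 2 * d ^ 2, 4 * c * d ^ 3, d ^ 4]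

/-- The invariant of degree two of binary quartics. -/
def quadInvariant (v : Fin 5 → K) : K :=
  v 0 * v 4 - 4 * v 1 * v 3 + 3 * v 2 ^ 2

/-- The invariant of degree three of binary quartics: the determinant of the Hankel matrix
`(v (i + j))` with `i, j < 3`. -/
def cubicInvariant (v : Fin 5 → K) : K :=
  v 0 * v 2 * v 4 + 2 * v 1 * v 2 * v 3 - v 2 ^ 3 - v 0 * v 3 ^ 2 - v 1 ^ 2 * v 4

theorem quartic_ext [CharZero K] {v w : Fin 5 → K}
    (h : ∀ t, quartic v 1 t = quartic w 1 t) : v = w := by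
  have at_zero := h 0
  have at_one := h 1
  have at_neg_one := h (-1)
  have at_two := h 2
  have at_neg_two := h (-2)
  simp only [quartic] at at_zero at_one at_neg_one at_two at_neg_two
  have eq₀ : v 0 = w 0 := by linear_combination at_zero
  have eq₄ : v 4 = w 4 := by
    linear_combination (at_two + at_neg_two - 4 * (at_one + at_neg_one) + 6 * at_zero) / 24
  have eq₃ : v 3 = w 3 := by
    linear_combination (at_two - at_neg_two - 2 * (at_one - at_neg_one)) / 48
  have eq₂ : v 2 = w 2 := by linear_combination (at_one + at_neg_one) / 12 - eq₀ / 6 - eq₄ / 6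
  have eq₁ : v 1 = w 1 := by linear_combination (at_one - at_neg_one) / 8 - eq₃
  funext i
  fin_cases i <;> assumption

theorem quartic_eq_sum (v : Fin 5 → K) (x y : K) :
    quartic v x y = ∑ k : Fin 5, Nat.choose 4 k * v k * y ^ (k : ℕ) * x ^ (4 - k : ℕ) := by
  have h : Nat.choose 4 2 = 6 := rfl
  simp [quartic, Fin.sum_univ_five, h, mul_right_comm]

theorem quartic_veronese (p : Fin 2 → K) (x y : K) :
    quartic (veronese p) x y = (p 0 * x + p 1 * y) ^ 4 := by
  simp only [quartic, veronese, cons_val]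
  ring

theorem veronese_smul (c : K) (p : Fin 2 → K) : veronese (c • p) = c ^ 4 • veronese p := by
  simp only [veronese, smul_cons, smul_empty, Pi.smul_apply, smul_eq_mul]
  congr! 1 <;> ring_nf

theorem quartic_symFour_mulVec (g : Matrix (Fin 2) (Fin 2) K) (v : Fin 5 → K) (x y : K) :
    quartic (symFour g *ᵥ v) x y =
      quartic v (g 0 0 * x + g 1 0 * y) (g 0 1 * x + g 1 1 * y) := by
  simp only [quartic, symFour, mulVec, dotProduct, Fin.sum_univ_five, of_apply, cons_val]
  ring

theorem symFour_mulVec_veronese [CharZero K] (g : Matrix (Fin 2) (Fin 2) K) (p : Fin 2 → K) :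
    symFour g *ᵥ veronese p = veronese (g *ᵥ p) :=
  quartic_ext fun t ↦ by
    simp only [quartic_symFour_mulVec, quartic_veronese, mulVec, dotProduct, Fin.sum_univ_two]
    ring

theorem symFour_one : symFour (1 : Matrix (Fin 2) (Fin 2) K) = 1 := by
  ext i j
  fin_cases i <;> fin_cases j <;> simp [symFour]

theorem symFour_mul [CharZero K] (g h : Matrix (Fin 2) (Fin 2) K) :
    symFour (g * h) = symFour g * symFour h :=
  ext_of_mulVec_single fun i ↦ quartic_ext fun t ↦ by
    simp only [← mulVec_mulVec, quartic_symFour_mulVec, mul_apply, Fin.sum_univ_two]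
    congr 1 <;> ring

theorem quadInvariant_symFour_mulVec (g : Matrix (Fin 2) (Fin 2) K) (v : Fin 5 → K) :
    quadInvariant (symFour g *ᵥ v) = g.det ^ 4 * quadInvariant v := by
  simp only [quadInvariant, symFour, mulVec, dotProduct, Fin.sum_univ_five, of_apply, cons_val,
    det_fin_two]
  ring

theorem cubicInvariant_symFour_mulVec (g : Matrix (Fin 2) (Fin 2) K) (v : Fin 5 → K) :
    cubicInvariant (symFour g *ᵥ v) = g.det ^ 6 * cubicInvariant v := by
  simp only [cubicInvariant, symFour, mulVec, dotProduct, Fin.sum_univ_five, of_apply, cons_val,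
    det_fin_two]
  ring

theorem polar_quadInvariant_veronese (v : Fin 5 → K) (p : Fin 2 → K) :
    QuadraticMap.polar quadInvariant v (veronese p) = quartic v (p 1) (-p 0) := by
  simp only [QuadraticMap.polar, quadInvariant, veronese, quartic, Pi.add_apply, cons_val]
  ring

/-- The differential of `cubicInvariant` at `v`, applied to `w`. -/
def cubicDeriv (v w : Fin 5 → K) : K :=
  (v 2 * v 4 - v 3 ^ 2) * w 0 + 2 * (v 2 * v 3 - v 1 * v 4) * w 1 +
    (v 0 * v 4 + 2 * v 1 * v 3 - 3 * v 2 ^ 2) * w 2 + 2 * (v 1 * v 2 - v 0 * v 3) * w 3 +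
    (v 0 * v 2 - v 1 ^ 2) * w 4

theorem cubicInvariant_add_sub (v w : Fin 5 → K) :
    cubicInvariant (v + w) - cubicInvariant (v - w) = 2 * (cubicDeriv v w + cubicInvariant w) := by
  simp only [cubicInvariant, cubicDeriv, Pi.add_apply, Pi.sub_apply]
  ring

theorem cubicDeriv_veronese (p : Fin 2 → K) (w : Fin 5 → K) : cubicDeriv (veronese p) w = 0 := by
  simp only [cubicDeriv, veronese, cons_val]
  ring

theorem exists_veronese_of_cubicDeriv_eq_zero [IsAlgClosed K] [CharZero K] {v : Fin 5 → K}
    (hv : ∀ w, cubicDeriv v w = 0) : ∃ p, v = veronese p := by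
  have d₀ : v 2 * v 4 = v 3 ^ 2 := by simpa [cubicDeriv, sub_eq_zero] using hv (Pi.single 0 1)
  have d₂ : v 0 * v 4 + 2 * v 1 * v 3 = 3 * v 2 ^ 2 := by
    simpa [cubicDeriv, sub_eq_zero] using hv (Pi.single 2 1)
  have d₃ : v 1 * v 2 = v 0 * v 3 := by
    simpa [cubicDeriv, sub_eq_zero] using hv (Pi.single 3 1)
  have d₄ : v 0 * v 2 = v 1 ^ 2 := by simpa [cubicDeriv, sub_eq_zero] using hv (Pi.single 4 1)
  by_cases h₀ : v 0 = 0
  · obtain ⟨y, hy⟩ := IsAlgClosed.exists_pow_nat_eq (v 4) (n := 4) (by norm_num)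
    have h₁ : v 1 = 0 := by simpa [h₀] using d₄.symm
    have h₂ : v 2 = 0 := by simpa [h₀, h₁] using d₂.symm
    have h₃ : v 3 = 0 := by simpa [h₂] using d₀.symm
    refine ⟨![0, y], funext fun i ↦ ?_⟩
    fin_cases i <;> simp [veronese, h₀, h₁, h₂, h₃, hy]
  · obtain ⟨x, hx⟩ := IsAlgClosed.exists_pow_nat_eq (v 0) (n := 4) (by norm_num)
    have hx₀ : x ≠ 0 := by
      rintro rfl
      exact h₀ (by rw [← hx]; simp)
    obtain ⟨y, hy⟩ : ∃ y, v 1 = x ^ 3 * y := ⟨v 1 / x ^ 3, by field_simp⟩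
    have h₂ : v 2 = x ^ 2 * y ^ 2 :=
      mul_left_cancel₀ h₀ <| by rw [d₄, hy, ← hx]; ring
    have h₃ : v 3 = x * y ^ 3 :=
      mul_left_cancel₀ h₀ <| by rw [← d₃, h₂, hy, ← hx]; ring
    have h₄ : v 4 = y ^ 4 :=
      mul_left_cancel₀ h₀ <| by
        rw [eq_sub_of_add_eq d₂, h₂, h₃, hy, ← hx]; ring
    refine ⟨![x, y], funext fun i ↦ ?_⟩
    fin_cases i <;> simp [veronese, hx, hy, h₂, h₃, h₄]

theorem cubicInvariant_add_veronese (v : Fin 5 → K) :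
    cubicInvariant (v + veronese ![0, 1]) = cubicInvariant v + (v 0 * v 2 - v 1 ^ 2) := by
  simp only [cubicInvariant, veronese, Pi.add_apply, cons_val]
  ring

section FixesVeronese

variable {φ : (Fin 5 → K) →ₗ[K] (Fin 5 → K)}

theorem apply_zero_eq_of_fixes_veronese (hI : ∀ v, quadInvariant (φ v) = quadInvariant v)
    (hy : φ (veronese ![0, 1]) = veronese ![0, 1]) (v : Fin 5 → K) : φ v 0 = v 0 := by
  simpa [hy, polar_quadInvariant_veronese, quartic] using polar_map_map hI v (veronese ![0, 1])

theorem apply_four_eq_of_fixes_veronese (hI : ∀ v, quadInvariant (φ v) = quadInvariant v)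
    (hx : φ (veronese ![1, 0]) = veronese ![1, 0]) (v : Fin 5 → K) : φ v 4 = v 4 := by
  simpa [hx, polar_quadInvariant_veronese, quartic] using polar_map_map hI v (veronese ![1, 0])

theorem minor_apply_eq_of_fixes_veronese (hJ : ∀ v, cubicInvariant (φ v) = cubicInvariant v)
    (hy : φ (veronese ![0, 1]) = veronese ![0, 1]) (v : Fin 5 → K) :
    φ v 0 * φ v 2 - φ v 1 ^ 2 = v 0 * v 2 - v 1 ^ 2 := by
  have h := hJ (v + veronese ![0, 1])
  rwa [map_add, hy, cubicInvariant_add_veronese, cubicInvariant_add_veronese, hJ,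
    add_right_inj] at h

theorem apply_two_eq_of_fixes_veronese (hI : ∀ v, quadInvariant (φ v) = quadInvariant v)
    (hJ : ∀ v, cubicInvariant (φ v) = cubicInvariant v)
    (hx : φ (veronese ![1, 0]) = veronese ![1, 0])
    (hy : φ (veronese ![0, 1]) = veronese ![0, 1]) (v : Fin 5 → K) : φ v 2 = v 2 := by
  have h := minor_apply_eq_of_fixes_veronese hJ hy v
  have h' := minor_apply_eq_of_fixes_veronese hJ hy (v + veronese ![1, 0])
  rw [map_add, hx] at h'
  rw [apply_zero_eq_of_fixes_veronese hI hy] at h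
  simp only [veronese, Pi.add_apply, cons_val, apply_zero_eq_of_fixes_veronese hI hy] at h'
  linear_combination h' - h

theorem exists_apply_one_eq_of_fixes_veronese (hI : ∀ v, quadInvariant (φ v) = quadInvariant v)
    (hJ : ∀ v, cubicInvariant (φ v) = cubicInvariant v)
    (hx : φ (veronese ![1, 0]) = veronese ![1, 0])
    (hy : φ (veronese ![0, 1]) = veronese ![0, 1]) :
    ∃ ε : K, ε ^ 2 = 1 ∧ ∀ v, φ v 1 = ε * v 1 := by
  have hsq (v) : φ v 1 ^ 2 = v 1 ^ 2 := by
    have h := minor_apply_eq_of_fixes_veronese hJ hy v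
    rwa [apply_zero_eq_of_fixes_veronese hI hy, apply_two_eq_of_fixes_veronese hI hJ hx hy,
      sub_right_inj] at h
  rcases eq_or_eq_neg_of_forall_sq_eq (f := LinearMap.proj 1 ∘ₗ φ) (g := LinearMap.proj 1) hsq
    with h | h
  · exact ⟨1, one_pow 2, fun v ↦ by simpa using congr($h v)⟩
  · exact ⟨-1, neg_one_sq, fun v ↦ by simpa using congr($h v)⟩

variable [CharZero K]

theorem eq_diagonal_of_fixes_veronese (hI : ∀ v, quadInvariant (φ v) = quadInvariant v)
    (hJ : ∀ v, cubicInvariant (φ v) = cubicInvariant v)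
    (hx : φ (veronese ![1, 0]) = veronese ![1, 0])
    (hy : φ (veronese ![0, 1]) = veronese ![0, 1]) :
    ∃ ε : K, ε ^ 2 = 1 ∧ ∀ v, φ v = ![v 0, ε * v 1, v 2, ε * v 3, v 4] := by
  have h₀ := apply_zero_eq_of_fixes_veronese hI hy
  obtain ⟨ε, hε, h₁⟩ := exists_apply_one_eq_of_fixes_veronese hI hJ hx hy
  have h₂ := apply_two_eq_of_fixes_veronese hI hJ hx hy
  have h₄ := apply_four_eq_of_fixes_veronese hI hx
  have h₁₃ (v) : v 1 * (φ v 3 - ε * v 3) = 0 := by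
    have h := hI v
    simp only [quadInvariant, h₀, h₁, h₂, h₄] at h
    linear_combination -ε / 4 * h - v 1 * φ v 3 * hε
  have h₃ : LinearMap.proj 3 ∘ₗ φ - ε • LinearMap.proj 3 = 0 :=
    (eq_zero_or_eq_zero_of_forall_mul_apply_eq_zero (f := LinearMap.proj 1) h₁₃).resolve_left
      fun h ↦ by simpa using congr($h 1)
  refine ⟨ε, hε, fun v ↦ funext fun i ↦ ?_⟩
  have h₃v : φ v 3 = ε * v 3 := by simpa [sub_eq_zero] using congr($h₃ v)
  fin_cases i <;> simp [h₀, h₁, h₂, h₃v, h₄]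

end FixesVeronese

theorem symFour_diagonal_mulVec [CharZero K] {s : K} (hs : s ^ 4 = 1) (v : Fin 5 → K) :
    symFour !![s, 0; 0, s ^ 3] *ᵥ v = ![v 0, s ^ 2 * v 1, v 2, s ^ 2 * v 3, v 4] :=
  quartic_ext fun t ↦ by
    rw [quartic_symFour_mulVec]
    simp only [quartic, of_apply, cons_val]
    linear_combination (v 0 + 4 * v 1 * s ^ 2 * t + 6 * v 2 * (s ^ 4 + 1) * t ^ 2 +
      4 * v 3 * s ^ 2 * (s ^ 4 + 1) * t ^ 3 + v 4 * (s ^ 8 + s ^ 4 + 1) * t ^ 4) * hs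

variable [IsAlgClosed K] [CharZero K]

theorem exists_map_veronese (φ : (Fin 5 → K) ≃ₗ[K] (Fin 5 → K))
    (hJ : ∀ v, cubicInvariant (φ v) = cubicInvariant v) (p : Fin 2 → K) :
    ∃ q, φ (veronese p) = veronese q := by
  have hderiv (v w) : cubicDeriv (φ v) (φ w) = cubicDeriv v w := by
    have h := cubicInvariant_add_sub (φ v) (φ w)
    rw [← map_add, ← map_sub, hJ, hJ, hJ, cubicInvariant_add_sub] at h
    linear_combination -h / 2
  refine exists_veronese_of_cubicDeriv_eq_zero fun w ↦ ?_
  rw [← φ.apply_symm_apply w, hderiv, cubicDeriv_veronese]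

theorem exists_map_veronese_eq_symFour_mulVec (φ : (Fin 5 → K) ≃ₗ[K] (Fin 5 → K))
    (hI : ∀ v, quadInvariant (φ v) = quadInvariant v)
    (hJ : ∀ v, cubicInvariant (φ v) = cubicInvariant v) :
    ∃ h : SpecialLinearGroup (Fin 2) K, φ (veronese ![1, 0]) = symFour h *ᵥ veronese ![1, 0] ∧
      φ (veronese ![0, 1]) = symFour h *ᵥ veronese ![0, 1] := by
  obtain ⟨p, hp⟩ := exists_map_veronese φ hJ ![1, 0]
  obtain ⟨q, hq⟩ := exists_map_veronese φ hJ ![0, 1]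
  have hdet : (p 0 * q 1 - p 1 * q 0) ^ 4 = 1 := by
    have h : QuadraticMap.polar quadInvariant (veronese p) (veronese q) =
        QuadraticMap.polar quadInvariant (veronese ![1, 0]) (veronese ![0, 1]) := by
      rw [← hp, ← hq]
      exact polar_map_map (φ := φ.toLinearMap) hI _ _
    simpa [polar_quadInvariant_veronese, quartic_veronese, ← sub_eq_add_neg] using h
  set c := (p 0 * q 1 - p 1 * q 0) ^ 3 with hc
  have hcq : veronese q = veronese (c • q) := by
    rw [veronese_smul, hc, pow_right_comm, hdet, one_pow, one_smul]
  refine ⟨⟨!![p 0, c * q 0; p 1, c * q 1], ?_⟩, ?_, ?_⟩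
  · rw [det_fin_two_of, hc]
    linear_combination hdet
  · rw [hp, symFour_mulVec_veronese]
    congr 1
    funext i
    fin_cases i <;> simp
  · rw [hq, hcq, symFour_mulVec_veronese]
    congr 1
    funext i
    fin_cases i <;> simp

theorem exists_eq_symFour_mulVec (φ : (Fin 5 → K) ≃ₗ[K] (Fin 5 → K))
    (hI : ∀ v, quadInvariant (φ v) = quadInvariant v)
    (hJ : ∀ v, cubicInvariant (φ v) = cubicInvariant v) :
    ∃ g : SpecialLinearGroup (Fin 2) K, ∀ v, φ v = symFour g *ᵥ v := by
  obtain ⟨h, hx, hy⟩ := exists_map_veronese_eq_symFour_mulVec φ hI hJ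
  obtain ⟨k, hkh⟩ : ∃ k : SpecialLinearGroup (Fin 2) K, k * h = 1 := ⟨h⁻¹, inv_mul_cancel h⟩
  have hinv : symFour (k : Matrix (Fin 2) (Fin 2) K) * symFour h = 1 := by
    rw [← symFour_mul, ← Matrix.SpecialLinearGroup.coe_mul, hkh,
      Matrix.SpecialLinearGroup.coe_one, symFour_one]
  obtain ⟨ε, hε, hdiag⟩ := eq_diagonal_of_fixes_veronese
    (φ := (symFour k).mulVecLin ∘ₗ φ.toLinearMap)
    (fun v ↦ by simp [quadInvariant_symFour_mulVec, hI])
    (fun v ↦ by simp [cubicInvariant_symFour_mulVec, hJ])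
    (by simp [hx, hinv]) (by simp [hy, hinv])
  obtain ⟨s, rfl⟩ := IsAlgClosed.exists_pow_nat_eq ε (n := 2) (by norm_num)
  have hs : s ^ 4 = 1 := by rw [← hε]; ring
  obtain ⟨d, hd⟩ : ∃ d : SpecialLinearGroup (Fin 2) K, ↑d = !![s, 0; 0, s ^ 3] :=
    ⟨⟨!![s, 0; 0, s ^ 3], by rw [det_fin_two_of]; linear_combination hs⟩, rfl⟩
  refine ⟨h * d, fun v ↦ ?_⟩
  calc φ v = symFour h *ᵥ (symFour k *ᵥ φ v) := by
        rw [mulVec_mulVec, mul_eq_one_comm.mp hinv, one_mulVec]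
    _ = symFour h *ᵥ (symFour d *ᵥ v) := by
        rw [hd, symFour_diagonal_mulVec hs, ← hdiag v]
        rfl
    _ = symFour ↑(h * d) *ᵥ v := by
        rw [mulVec_mulVec, ← symFour_mul, Matrix.SpecialLinearGroup.coe_mul]

end BinaryQuartics

section RankFive

open Matrix Polynomial

section QuarticCoeffs

variable (K : Type*) [Field K] [CharZero K]

/-- The coefficient vector, in the normalization of `quartic`, of a polynomial of degree at most
four. -/
def quarticCoeffs : degreeLT K 5 ≃ₗ[K] (Fin 5 → K) :=
  (degreeLTEquiv K 5).trans <| LinearEquiv.piCongrRight fun k ↦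
    LinearEquiv.smulOfNeZero K K ((Nat.choose 4 k : K)⁻¹)
      (inv_ne_zero (Nat.cast_ne_zero.mpr (Nat.choose_pos (Nat.le_of_lt_succ k.2)).ne'))

variable {K}

theorem choose_mul_quarticCoeffs (p : degreeLT K 5) (k : Fin 5) :
    Nat.choose 4 k * quarticCoeffs K p k = (p : K[X]).coeff k :=
  mul_inv_cancel_left₀ (Nat.cast_ne_zero.mpr (Nat.choose_pos (Nat.le_of_lt_succ k.2)).ne') _

theorem quartic_quarticCoeffs (p : degreeLT K 5) (x y : K) :
    quartic (quarticCoeffs K p) x y = MvPolynomial.eval ![y, x] (homogenize (p : K[X]) 4) := by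
  simp only [quartic_eq_sum, choose_mul_quarticCoeffs, eval_homogenize_eq_sum,
    Finset.sum_range, cons_val]

theorem quarticCoeffs_eq_symFour_mulVec (g : Matrix (Fin 2) (Fin 2) K) {p p' : degreeLT K 5}
    (h : (p' : K[X]) = formAction 4 g p) :
    quarticCoeffs K p' = symFour g *ᵥ quarticCoeffs K p :=
  quartic_ext fun t ↦ by
    have hdeg : (p' : K[X]).natDegree ≤ 4 := natDegree_le_iff_degree_le.mpr <| mem_degreeLE.mp <|
      degreeLT_succ_eq_degreeLE.le p'.2
    rw [quartic_symFour_mulVec, quartic_quarticCoeffs, quartic_quarticCoeffs,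
      eval_homogenize hdeg _ (by simp), h]
    simp [eval_formAction]

end QuarticCoeffs

variable {W : Type} [AddCommGroup W] [Module ℂ W]
  {ρ : SpecialLinearGroup (Fin 2) ℂ →* (W ≃ₗ[ℂ] W)}

theorem exists_linearEquiv_eq_symFour_mulVec [FiniteDimensional ℂ W]
    (hW : Module.finrank ℂ W = 5) (hρ : IsPolynomialRep ρ) (hirr : IsIrreducibleRep ρ) :
    ∃ e : W ≃ₗ[ℂ] (Fin 5 → ℂ), ∀ (g : SpecialLinearGroup (Fin 2) ℂ) (w : W),
      e (ρ g w) = symFour g *ᵥ e w := by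
  obtain ⟨e, he⟩ : ∃ e : W ≃ₗ[ℂ] degreeLT ℂ 5, ∀ (g : SpecialLinearGroup (Fin 2) ℂ) (w : W),
      (e (ρ g w) : ℂ[X]) = formAction 4 g (e w) :=
    exists_linearEquiv_degreeLT_eq_formAction hW hρ hirr
  exact ⟨e.trans (quarticCoeffs ℂ), fun g w ↦ quarticCoeffs_eq_symFour_mulVec _ (he g w)⟩

theorem isPolyFun_quadInvariant {V : Type*} [AddCommGroup V] [Module ℂ V]
    (e : V ≃ₗ[ℂ] (Fin 5 → ℂ)) : IsPolyFun fun v ↦ quadInvariant (e v) := by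
  let A := Algebra.adjoin ℂ (Set.range fun l : V →ₗ[ℂ] ℂ ↦ (l : V → ℂ))
  let x (i) : A := ⟨fun v ↦ e v i, isPolyFun_coord e i⟩
  exact (x 0 * x 4 - 4 * x 1 * x 3 + 3 * x 2 ^ 2).2

theorem isPolyFun_cubicInvariant {V : Type*} [AddCommGroup V] [Module ℂ V]
    (e : V ≃ₗ[ℂ] (Fin 5 → ℂ)) : IsPolyFun fun v ↦ cubicInvariant (e v) := by
  let A := Algebra.adjoin ℂ (Set.range fun l : V →ₗ[ℂ] ℂ ↦ (l : V → ℂ))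
  let x (i) : A := ⟨fun v ↦ e v i, isPolyFun_coord e i⟩
  exact (x 0 * x 2 * x 4 + 2 * x 1 * x 2 * x 3 - x 2 ^ 3 - x 0 * x 3 ^ 2 - x 1 ^ 2 * x 4).2

theorem stmt18_general {W : Type} [AddCommGroup W] [Module ℂ W] (hW : Module.finrank ℂ W = 5)
    (ρ : SpecialLinearGroup (Fin 2) ℂ →* (W ≃ₗ[ℂ] W)) (hρ : IsPolynomialRep ρ)
    (hirr : IsIrreducibleRep ρ) : primeGroup ρ.range = ρ.range := by
  have : FiniteDimensional ℂ W := Module.finite_of_finrank_eq_succ hW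
  obtain ⟨e, he⟩ := exists_linearEquiv_eq_symFour_mulVec hW hρ hirr
  refine (le_primeGroup _).antisymm' fun φ hφ ↦ ?_
  have hI (v) : quadInvariant (e (φ v)) = quadInvariant (e v) :=
    hφ _ (isPolyFun_quadInvariant e) (by
      rintro _ ⟨g, rfl⟩ w
      rw [he, quadInvariant_symFour_mulVec, g.det_coe, one_pow, one_mul]) v
  have hJ (v) : cubicInvariant (e (φ v)) = cubicInvariant (e v) :=
    hφ _ (isPolyFun_cubicInvariant e) (by
      rintro _ ⟨g, rfl⟩ w
      rw [he, cubicInvariant_symFour_mulVec, g.det_coe, one_pow, one_mul]) v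
  obtain ⟨g, hg⟩ := exists_eq_symFour_mulVec (e.symm.trans (φ.trans e))
    (fun v ↦ by simp [hI]) (fun v ↦ by simp [hJ])
  refine ⟨g, LinearEquiv.ext fun w ↦ e.injective ?_⟩
  simpa [he] using (hg (e w)).symm

end RankFive

/-- Let `G = SO₃(ℂ)` act on `V = R₄ = Sym⁴(ℂ²)`, the 5-dimensional
irreducible representation of `SL₂(ℂ)` (which factors through `SO₃`, realized as any
polynomial irreducible representation of `SL₂` on `ℂ⁵`, whose image is then the image
of `SO₃`).  Then `G' = G`: every element of `GL(V)` preserving all `G`-invariant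
polynomials lies in the image of `SO₃`. -/
theorem stmt18
    (ρ : Matrix.SpecialLinearGroup (Fin 2) ℂ →* ((Fin 5 → ℂ) ≃ₗ[ℂ] (Fin 5 → ℂ)))
    (hρpoly : IsPolynomialRep ρ) (hρirr : IsIrreducibleRep ρ)
    (hcenter : ρ (-1) = 1) :
    primeGroup ρ.range = ρ.range :=
  stmt18_general (by simp) ρ hρpoly hρirr

end Stmt18
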